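/- arXiv:2412.18959 — 2 statements merged into one kernel-verified Lean document; each statement's English description precedes it below -/
import Mathlib

section
/- If (B₁ | A₁) and (B₂ | A₂) are irreducible skew-symmetric augmented matrices, each obtained from the same skew-symmetric augmented matrix (B | A) by a finite sequence of permutations and reductions of type 1 or 2, then (B₁ | A₁) is a permutation of (B₂ | A₂); in particular they have the same dimension. -/
/-- A skew-symmetric augmented matrix `(B ∣ A)` of dimension `n`:
`B` is an `n × n` integer matrix with `Bᵀ = -B` and `A` is an integer
column vector of length `n`.  Dimension `0` gives the empty matrix. -/
structure SkewAug where
  n : ℕ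
  B : Matrix (Fin n) (Fin n) ℤ
  A : Fin n → ℤ
  skew : B.transpose = -B

namespace SkewAug

/-- The permutation matrix of a permutation `σ` of `Fin n`. -/
def permMatrixOf {n : ℕ} (σ : Equiv.Perm (Fin n)) : Matrix (Fin n) (Fin n) ℤ :=
  Matrix.of fun i j => if σ j = i then 1 else 0

/-- `P` is a permutation matrix. -/
def IsPermMatrix {n : ℕ} (P : Matrix (Fin n) (Fin n) ℤ) : Prop :=
  ∃ σ : Equiv.Perm (Fin n), P = permMatrixOf σ

/-- `PermStep M N` : `N` is a permutation of `M`, i.e. there is a permutation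
matrix `P` with `N = (P M.B Pᵀ ∣ P M.A)`. -/
def PermStep (M N : SkewAug) : Prop :=
  ∃ (h : M.n = N.n) (P : Matrix (Fin N.n) (Fin N.n) ℤ),
    IsPermMatrix P ∧
    N.B = P * (Matrix.reindex (finCongr h) (finCongr h) M.B) * P.transpose ∧
    N.A = P.mulVec (fun i => M.A (Fin.cast h.symm i))

/-- `DeleteAt M S N` : `N` is obtained from `M` by deleting the rows and
columns of `M.B` indexed by `S` and the entries of `M.A` indexed by `S`. -/
def DeleteAt (M : SkewAug) (S : Set (Fin M.n)) (N : SkewAug) : Prop :=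
  ∃ e : Fin N.n → Fin M.n, StrictMono e ∧ (∀ k, k ∈ Set.range e ↔ k ∉ S) ∧
    (∀ i j, N.B i j = M.B (e i) (e j)) ∧ (∀ i, N.A i = M.A (e i))

/-- The condition allowing a reduction of type 1 at index `j`:
`A j = 0` and the `j`-th column of `B` is the zero vector or equals `A`. -/
def Red1Cond (M : SkewAug) (j : Fin M.n) : Prop :=
  M.A j = 0 ∧ ((∀ i, M.B i j = 0) ∨ (∀ i, M.B i j = M.A i))

/-- The condition allowing a reduction of type 2 at distinct indices `r, t`:
`A r = -A t` and the sum of the `r`-th and `t`-th columns of `B` equals `A`. -/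
def Red2Cond (M : SkewAug) (r t : Fin M.n) : Prop :=
  r ≠ t ∧ M.A r = -M.A t ∧ ∀ i, M.B i r + M.B i t = M.A i

/-- `N` is obtained from `M` by a reduction of type 1. -/
def Red1 (M N : SkewAug) : Prop :=
  ∃ j : Fin M.n, Red1Cond M j ∧ DeleteAt M {j} N

/-- `N` is obtained from `M` by a reduction of type 2. -/
def Red2 (M N : SkewAug) : Prop :=
  ∃ r t : Fin M.n, Red2Cond M r t ∧ DeleteAt M {r, t} N

/-- A single move: a permutation, a reduction of type 1 or 2, or an
extension of type 1 or 2 (the inverse of a reduction). -/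
def Move (M N : SkewAug) : Prop :=
  PermStep M N ∨ Red1 M N ∨ Red2 M N ∨ Red1 N M ∨ Red2 N M

/-- S-equivalence: `M` can be transformed into `N` by a finite sequence of
moves. -/
def SEquiv : SkewAug → SkewAug → Prop :=
  Relation.ReflTransGen Move

/-- A reduction of type 1 or type 2 can be applied to `M`. -/
def Reducible (M : SkewAug) : Prop :=
  (∃ j, Red1Cond M j) ∨ (∃ r t, Red2Cond M r t)

/-- `M` is irreducible: no reduction of type 1 or type 2 can be applied. -/
def Irreducible (M : SkewAug) : Prop := ¬ Reducible M

/-- The empty skew-symmetric augmented matrix. -/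
def empty : SkewAug := ⟨0, 0, 0, by simp⟩

/-- `M` is trivial if it is S-equivalent to the empty matrix. -/
def Trivial (M : SkewAug) : Prop := SEquiv M empty

end SkewAug

/-- A move which is a permutation or a reduction of type 1 or 2 (no
extensions). -/
def SkewAug.RedMove (M N : SkewAug) : Prop :=
  SkewAug.PermStep M N ∨ SkewAug.Red1 M N ∨ SkewAug.Red2 M N

/-!
Call a set of indices removable if it is empty or may be deleted by one reduction. Deleting a
removable set, up to reordering the remaining indices, has the diamond property: if `S` and `T` are
removable, then so are `S \ T` and `T \ S`, hence the deletion of `S ∪ T` is reached both ways, with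
a single exception, two reductions of type 2 at pairs `{r, t}` and `{r, t'}`. There the columns of
`t` and `t'` are both equal to `A` minus the column of `r`, so by skew-symmetry exchanging `t` and
`t'` is a symmetry of `(B ∣ A)`, and the two deletions already agree up to reordering. By the
Church–Rosser theorem any two matrices obtained from `(B ∣ A)` reach a common one, and an
irreducible matrix reaches only its own permutations.
-/

namespace SkewAug

variable {M N P Q : SkewAug} {S T : Set (Fin M.n)} {e : Fin P.n → Fin M.n} {x r t t' : Fin M.n}

/-- `e` identifies `N` with the matrix obtained from `M` by deleting the indices in `S`.  Unlike in
`DeleteAt`, the remaining indices may be reordered, so that permutations are the case `S = ∅`. -/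
structure IsDeletionMap (M : SkewAug) (S : Set (Fin M.n)) (N : SkewAug)
    (e : Fin N.n → Fin M.n) : Prop where
  injective : Function.Injective e
  range_eq : Set.range e = Sᶜ
  B_eq : N.B = M.B.submatrix e e
  A_eq : N.A = M.A ∘ e

/-- `N` is, up to reordering, the matrix obtained from `M` by deleting the indices in `S`. -/
def DeletesTo (M : SkewAug) (S : Set (Fin M.n)) (N : SkewAug) : Prop :=
  ∃ e, IsDeletionMap M S N e

theorem IsDeletionMap.mem_range_iff (he : IsDeletionMap M S P e) : x ∈ Set.range e ↔ x ∉ S := by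
  rw [he.range_eq, Set.mem_compl_iff]

theorem DeleteAt.deletesTo (h : DeleteAt M S N) : DeletesTo M S N := by
  obtain ⟨e, he, hrange, hB, hA⟩ := h
  exact ⟨e, he.injective, Set.ext hrange, Matrix.ext hB, funext hA⟩

theorem exists_deletesTo (M : SkewAug) (S : Set (Fin M.n)) : ∃ N, DeletesTo M S N := by
  let e : Fin (Nat.card ↥Sᶜ) → Fin M.n := fun i => (Finite.equivFin ↥Sᶜ).symm i
  have hskew : (M.B.submatrix e e).transpose = -M.B.submatrix e e := by
    rw [Matrix.transpose_submatrix, M.skew, Matrix.submatrix_neg, Pi.neg_apply, Pi.neg_apply]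
  have hrange : Set.range e = Sᶜ :=
    ((Finite.equivFin ↥Sᶜ).symm.surjective.range_comp Subtype.val).trans Subtype.range_coe
  exact ⟨⟨_, M.B.submatrix e e, M.A ∘ e, hskew⟩, e,
    Subtype.val_injective.comp (Equiv.injective _), hrange, rfl, rfl⟩

theorem DeletesTo.refl (M : SkewAug) : DeletesTo M ∅ M :=
  ⟨id, Function.injective_id, by simp, by simp, by simp⟩

theorem IsDeletionMap.deletesTo_preimage (he : IsDeletionMap M S P e)
    (hQ : DeletesTo M (S ∪ T) Q) : DeletesTo P (e ⁻¹' T) Q := by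
  obtain ⟨f, hf⟩ := hQ
  have hfactor : ∀ q, ∃ p, e p = f q := fun q =>
    he.mem_range_iff.2 fun hq => hf.mem_range_iff.1 ⟨q, rfl⟩ (Or.inl hq)
  choose g hg using hfactor
  obtain rfl : f = e ∘ g := funext fun q => (hg q).symm
  refine ⟨g, hf.injective.of_comp, ?_, ?_, ?_⟩
  · calc Set.range g = e ⁻¹' Set.range (e ∘ g) := by
          rw [Set.range_comp, Set.preimage_image_eq _ he.injective]
      _ = (e ⁻¹' T)ᶜ := by
          ext p
          have hp : e p ∉ S := he.mem_range_iff.1 ⟨p, rfl⟩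
          simp [hf.range_eq, hp]
  · rw [hf.B_eq, he.B_eq, Matrix.submatrix_submatrix]
  · rw [hf.A_eq, he.A_eq, Function.comp_assoc]

theorem DeletesTo.unique (hP : DeletesTo M S P) (hQ : DeletesTo M S Q) : DeletesTo P ∅ Q := by
  obtain ⟨e, he⟩ := hP
  exact he.deletesTo_preimage (T := ∅) (by rwa [Set.union_empty])

theorem DeletesTo.symm (h : DeletesTo M ∅ N) : DeletesTo N ∅ M :=
  h.unique (.refl M)

theorem DeletesTo.image_of_symmetry {σ : Equiv.Perm (Fin M.n)}
    (hB : M.B.submatrix σ σ = M.B) (hA : M.A ∘ σ = M.A) (h : DeletesTo M S N) :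
    DeletesTo M (σ '' S) N := by
  obtain ⟨e, he⟩ := h
  refine ⟨σ ∘ e, σ.injective.comp he.injective, ?_, ?_, ?_⟩
  · rw [Set.range_comp, he.range_eq, Set.image_compl_eq σ.bijective]
  · rw [← Matrix.submatrix_submatrix, hB, he.B_eq]
  · rw [← Function.comp_assoc, hA, he.A_eq]

theorem permMatrixOf_mulVec {n : ℕ} (σ : Equiv.Perm (Fin n)) (v : Fin n → ℤ) :
    (permMatrixOf σ).mulVec v = v ∘ σ.symm := by
  ext i
  simp [permMatrixOf, Matrix.mulVec, dotProduct, ← Equiv.eq_symm_apply]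

theorem permMatrixOf_mul_mul_transpose {n : ℕ} (σ : Equiv.Perm (Fin n))
    (B : Matrix (Fin n) (Fin n) ℤ) :
    permMatrixOf σ * B * (permMatrixOf σ).transpose = B.submatrix σ.symm σ.symm := by
  ext i j
  simp [permMatrixOf, Matrix.mul_apply, ← Equiv.eq_symm_apply]

theorem PermStep.deletesTo (h : PermStep M N) : DeletesTo M ∅ N := by
  obtain ⟨hn, _, ⟨σ, rfl⟩, hB, hA⟩ := h
  let e : Fin N.n ≃ Fin M.n := σ.symm.trans (finCongr hn.symm)
  refine ⟨e, e.injective, by simp, ?_, ?_⟩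
  · rw [hB, permMatrixOf_mul_mul_transpose]
    rfl
  · rw [hA, permMatrixOf_mulVec]
    rfl

theorem DeletesTo.permStep (h : DeletesTo M ∅ N) : PermStep M N := by
  obtain ⟨e, he⟩ := h
  have hsurj : Function.Surjective e := by rw [← Set.range_eq_univ, he.range_eq, Set.compl_empty]
  let E : Fin N.n ≃ Fin M.n := Equiv.ofBijective e ⟨he.injective, hsurj⟩
  have hn : M.n = N.n := (Fin.equiv_iff_eq.1 ⟨E⟩).symm
  let σ : Equiv.Perm (Fin N.n) := (E.trans (finCongr hn)).symm
  refine ⟨hn, permMatrixOf σ, ⟨σ, rfl⟩, ?_, ?_⟩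
  · rw [permMatrixOf_mul_mul_transpose, he.B_eq]
    rfl
  · rw [permMatrixOf_mulVec, he.A_eq]
    rfl

/-- A set of indices which is empty or may be deleted by a reduction of type 1 or 2.  The empty set
is included so that permutations and reductions can be treated alike. -/
inductive IsRemovable (M : SkewAug) : Set (Fin M.n) → Prop
  | empty : IsRemovable M ∅
  | singleton {j : Fin M.n} (h : Red1Cond M j) : IsRemovable M {j}
  | pair {r t : Fin M.n} (h : Red2Cond M r t) : IsRemovable M {r, t}

/-- One step of the rewriting system: deletion of a removable set, followed by a reordering. -/
def RemovalStep (M N : SkewAug) : Prop :=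
  ∃ S, IsRemovable M S ∧ DeletesTo M S N

theorem DeletesTo.removalStep (h : DeletesTo M ∅ N) : RemovalStep M N :=
  ⟨∅, .empty, h⟩

theorem RedMove.removalStep (h : RedMove M N) : RemovalStep M N := by
  rcases h with hperm | ⟨j, hj, hdel⟩ | ⟨r, t, hrt, hdel⟩
  · exact hperm.deletesTo.removalStep
  · exact ⟨{j}, .singleton hj, hdel.deletesTo⟩
  · exact ⟨{r, t}, .pair hrt, hdel.deletesTo⟩

theorem Irreducible.eq_empty_of_isRemovable (hM : Irreducible M) (hS : IsRemovable M S) :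
    S = ∅ := by
  cases hS with
  | empty => rfl
  | singleton h => exact absurd (Or.inl ⟨_, h⟩) hM
  | pair h => exact absurd (Or.inr ⟨_, _, h⟩) hM

theorem IsDeletionMap.red1Cond {p : Fin P.n} (he : IsDeletionMap M S P e)
    (h : Red1Cond M (e p)) : Red1Cond P p := by
  obtain ⟨hA, hcol⟩ := h
  simp only [Red1Cond, he.A_eq, he.B_eq, Matrix.submatrix_apply, Function.comp_apply]
  exact ⟨hA, hcol.imp (fun hzero i => hzero (e i)) (fun heq i => heq (e i))⟩

theorem IsDeletionMap.red2Cond {p q : Fin P.n} (he : IsDeletionMap M S P e)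
    (h : Red2Cond M (e p) (e q)) : Red2Cond P p q := by
  obtain ⟨hne, hA, hcol⟩ := h
  simp only [Red2Cond, he.A_eq, he.B_eq, Matrix.submatrix_apply, Function.comp_apply]
  exact ⟨ne_of_apply_ne e hne, hA, fun i => hcol (e i)⟩

theorem IsDeletionMap.isRemovable_preimage (he : IsDeletionMap M S P e) (hT : IsRemovable M T)
    (hST : Disjoint S T) : IsRemovable P (e ⁻¹' T) := by
  have hlift : ∀ k ∈ T, ∃ p, e p = k := fun k hk =>
    he.mem_range_iff.2 (Set.disjoint_right.1 hST hk)
  cases hT with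
  | empty => exact .empty
  | singleton h =>
    obtain ⟨p, rfl⟩ := hlift _ rfl
    rw [← Set.image_singleton, Set.preimage_image_eq _ he.injective]
    exact .singleton (he.red1Cond h)
  | pair h =>
    obtain ⟨p, rfl⟩ := hlift _ (Or.inl rfl)
    obtain ⟨q, rfl⟩ := hlift _ (Or.inr rfl)
    rw [← Set.image_pair, Set.preimage_image_eq _ he.injective]
    exact .pair (he.red2Cond h)

theorem DeletesTo.removalStep_of_disjoint (hP : DeletesTo M S P) (hT : IsRemovable M T)
    (hST : Disjoint S T) (hQ : DeletesTo M (S ∪ T) Q) : RemovalStep P Q := by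
  obtain ⟨e, he⟩ := hP
  exact ⟨e ⁻¹' T, he.isRemovable_preimage hT hST, he.deletesTo_preimage hQ⟩

theorem RemovalStep.of_deletesTo (h : DeletesTo M ∅ N) (hNP : RemovalStep N P) :
    RemovalStep M P := by
  obtain ⟨S, hS, hP⟩ := hNP
  exact h.symm.removalStep_of_disjoint hS (Set.empty_disjoint S) (by rwa [Set.empty_union])

theorem Irreducible.deletesTo_of_reflTransGen (hM : Irreducible M)
    (h : Relation.ReflTransGen RemovalStep M N) : DeletesTo M ∅ N := by
  induction h with
  | refl => exact .refl M
  | tail _ hstep ih =>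
    obtain ⟨S, hS, hdel⟩ := RemovalStep.of_deletesTo ih hstep
    rwa [hM.eq_empty_of_isRemovable hS] at hdel

theorem Red2Cond.symm (h : Red2Cond M r t) : Red2Cond M t r := by
  obtain ⟨hne, hA, hcol⟩ := h
  exact ⟨hne.symm, by rw [hA, neg_neg], fun i => by rw [add_comm, hcol]⟩

theorem Red2Cond.red1Cond_right (h : Red2Cond M r t) (hr : Red1Cond M r) : Red1Cond M t := by
  obtain ⟨-, hA, hcol⟩ := h
  obtain ⟨hAr, hzero | heq⟩ := hr
  · exact ⟨by linarith, Or.inr fun i => by linarith [hcol i, hzero i]⟩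
  · exact ⟨by linarith, Or.inl fun i => by linarith [hcol i, heq i]⟩

theorem B_apply_eq_neg (M : SkewAug) (i j : Fin M.n) : M.B i j = -M.B j i :=
  congrFun₂ M.skew j i

theorem submatrix_swap_of_col_eq (hcol : ∀ i, M.B i t = M.B i t') :
    M.B.submatrix (Equiv.swap t t') (Equiv.swap t t') = M.B := by
  have hrow : ∀ i, M.B t i = M.B t' i := fun i => by
    rw [B_apply_eq_neg, hcol, ← B_apply_eq_neg]
  ext i j
  rw [Matrix.submatrix_apply, Equiv.apply_swap_eq_self (hcol _),
    Equiv.apply_swap_eq_self (v := fun k => M.B k j) (hrow j)]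

theorem DeletesTo.exchange (h : Red2Cond M r t) (h' : Red2Cond M r t')
    (hN : DeletesTo M {r, t} N) : DeletesTo M {r, t'} N := by
  obtain ⟨hrt, hA, hcol⟩ := h
  obtain ⟨hrt', hA', hcol'⟩ := h'
  have hswap : Equiv.swap t t' '' {r, t} = {r, t'} := by
    rw [Set.image_pair, Equiv.swap_apply_left, Equiv.swap_apply_of_ne_of_ne hrt hrt']
  rw [← hswap]
  refine hN.image_of_symmetry ?_ ?_
  · exact submatrix_swap_of_col_eq fun i => by linarith [hcol i, hcol' i]
  · exact funext <| Equiv.apply_swap_eq_self (by linarith)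

theorem IsRemovable.eq_singleton_or_pair (hS : IsRemovable M S) (hx : x ∈ S) :
    (Red1Cond M x ∧ S = {x}) ∨ ∃ t, Red2Cond M x t ∧ S = {x, t} := by
  cases hS with
  | empty => exact absurd hx (Set.notMem_empty x)
  | singleton h =>
    obtain rfl := hx
    exact Or.inl ⟨h, rfl⟩
  | pair h =>
    obtain rfl | rfl := hx
    · exact Or.inr ⟨_, h, rfl⟩
    · exact Or.inr ⟨_, h.symm, Set.pair_comm _ _⟩

theorem Red2Cond.isRemovable_sdiff (h : Red2Cond M r t) (hr : Red1Cond M r) :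
    IsRemovable M ({r} \ {r, t}) ∧ IsRemovable M ({r, t} \ {r}) := by
  have hleft : ({r} : Set (Fin M.n)) \ {r, t} = ∅ :=
    Set.sdiff_eq_empty.2 (Set.singleton_subset_iff.2 (Or.inl rfl))
  have hright : ({r, t} : Set (Fin M.n)) \ {r} = {t} := Set.pair_sdiff_left h.1
  rw [hleft, hright]
  exact ⟨.empty, .singleton (h.red1Cond_right hr)⟩

theorem IsRemovable.sdiff_or_common_index (hS : IsRemovable M S) (hT : IsRemovable M T) :
    (IsRemovable M (S \ T) ∧ IsRemovable M (T \ S)) ∨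
      ∃ r t t', (Red2Cond M r t ∧ S = {r, t}) ∧ (Red2Cond M r t' ∧ T = {r, t'}) := by
  by_cases hdisj : Disjoint S T
  · rw [hdisj.sdiff_eq_left, hdisj.sdiff_eq_right]
    exact Or.inl ⟨hS, hT⟩
  obtain ⟨x, hxS, hxT⟩ := Set.not_disjoint_iff.1 hdisj
  rcases hS.eq_singleton_or_pair hxS with ⟨hx, rfl⟩ | ⟨t, hxt, rfl⟩ <;>
    rcases hT.eq_singleton_or_pair hxT with ⟨hx', rfl⟩ | ⟨t', hxt', rfl⟩
  · rw [sdiff_self]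
    exact Or.inl ⟨.empty, .empty⟩
  · exact Or.inl (hxt'.isRemovable_sdiff hx)
  · exact Or.inl (hxt.isRemovable_sdiff hx').symm
  · exact Or.inr ⟨x, t, t', ⟨hxt, rfl⟩, ⟨hxt', rfl⟩⟩

theorem RemovalStep.diamond (hP : RemovalStep M P) (hQ : RemovalStep M Q) :
    ∃ R, RemovalStep P R ∧ RemovalStep Q R := by
  obtain ⟨S, hS, hP⟩ := hP
  obtain ⟨T, hT, hQ⟩ := hQ
  rcases hS.sdiff_or_common_index hT with ⟨hST, hTS⟩ | ⟨r, t, t', ⟨hrt, rfl⟩, ⟨hrt', rfl⟩⟩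
  · obtain ⟨R, hR⟩ := exists_deletesTo M (S ∪ T)
    exact ⟨R,
      hP.removalStep_of_disjoint hTS Set.disjoint_sdiff_right (by rwa [Set.union_sdiff_self]),
      hQ.removalStep_of_disjoint hST Set.disjoint_sdiff_right
        (by rwa [Set.union_sdiff_self, Set.union_comm])⟩
  · exact ⟨Q, ((hP.exchange hrt hrt').unique hQ).removalStep, (DeletesTo.refl Q).removalStep⟩

theorem RemovalStep.join_of_reflTransGen (hP : Relation.ReflTransGen RemovalStep M P)
    (hQ : Relation.ReflTransGen RemovalStep M Q) :
    Relation.Join (Relation.ReflTransGen RemovalStep) P Q := by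
  refine Relation.church_rosser (fun _ _ _ hb hc => ?_) hP hQ
  obtain ⟨d, hbd, hcd⟩ := hb.diamond hc
  exact ⟨d, .single hbd, .single hcd⟩

end SkewAug

/-- If two irreducible skew-symmetric augmented matrices are
each obtained from the same skew-symmetric augmented matrix `(B ∣ A)` by a
finite sequence of permutations and reductions of type 1 or 2, then one is a
permutation of the other; in particular they have the same dimension. -/
theorem irreducible_reductions_unique (M M₁ M₂ : SkewAug)
    (h₁ : Relation.ReflTransGen SkewAug.RedMove M M₁)
    (h₂ : Relation.ReflTransGen SkewAug.RedMove M M₂)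
    (hi₁ : SkewAug.Irreducible M₁) (hi₂ : SkewAug.Irreducible M₂) :
    SkewAug.PermStep M₂ M₁ ∧ M₁.n = M₂.n := by
  obtain ⟨Q, hQ₁, hQ₂⟩ := SkewAug.RemovalStep.join_of_reflTransGen
    (Relation.ReflTransGen.mono (fun _ _ => SkewAug.RedMove.removalStep) _ _ h₁)
    (Relation.ReflTransGen.mono (fun _ _ => SkewAug.RedMove.removalStep) _ _ h₂)
  have hdel₁ : SkewAug.DeletesTo M₁ ∅ Q := hi₁.deletesTo_of_reflTransGen hQ₁
  have hdel₂ : SkewAug.DeletesTo M₂ ∅ Q := hi₂.deletesTo_of_reflTransGen hQ₂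
  have hperm : SkewAug.PermStep M₂ M₁ := (hdel₂.symm.unique hdel₁.symm).permStep
  exact ⟨hperm, hperm.1.symm⟩
end

section
/- The skew-symmetric augmented matrix (B | A) of dimension 4 over the integers given by B with rows (0, -1, -2, 0), (1, 0, 0, 2), (2, 0, 0, 1), (0, -2, -1, 0) and A = (-1, 1, 1, -1)ᵀ is not trivial: it is not S-equivalent to the empty matrix. (This is the augmented matrix associated with Kishino's doodle, whose nontriviality shows that Kishino's doodle is non-classical.) -/
/-- The `B`-matrix of the augmented matrix associated with Kishino's doodle. -/
def kishinoB : Matrix (Fin 4) (Fin 4) ℤ :=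
  !![0, -1, -2, 0; 1, 0, 0, 2; 2, 0, 0, 1; 0, -2, -1, 0]

/-- The augmented column of the augmented matrix of Kishino's doodle. -/
def kishinoA : Fin 4 → ℤ := ![-1, 1, 1, -1]

/-- The skew-symmetric augmented matrix associated with Kishino's doodle. -/
def kishino : SkewAug := ⟨4, kishinoB, kishinoA, by decide⟩

/-!
Put `C i j = 2 * B i j - A i + A j`, again a skew-symmetric matrix. The condition for a reduction of
type 2 at `r` and `t` says exactly that `A t = -A r` and that the `t`-th column of `C` is minus the
`r`-th. Hence, for every even function `φ`, the terms of `∑ i, ∑ j, A i * A j * φ (C i j)` that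
involve `r` cancel those that involve `t`; a reduction of type 1 only removes zero terms. The sum is
therefore invariant under S-equivalence and vanishes on trivial matrices, but for `φ c = c ^ 2` it
is `-16` on Kishino's matrix.
-/

section SumComp

variable {ι κ G : Type*} [Fintype ι] [Fintype κ] [AddCommMonoid G] {e : ι → κ} {s : Finset κ}

theorem sum_comp_eq_of_sum_compl_range_eq_zero (he : Function.Injective e)
    (hs : ∀ k, k ∈ Set.range e ↔ k ∉ s) {f : κ → G} (hf : ∑ k ∈ s, f k = 0) :
    ∑ i, f (e i) = ∑ k, f k := by
  classical
  have image_eq : Finset.univ.image e = sᶜ := by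
    ext k
    simpa using hs k
  calc ∑ i, f (e i) = ∑ k ∈ sᶜ, f k := by rw [← image_eq, Finset.sum_image he.injOn]
    _ = ∑ k ∈ s, f k + ∑ k ∈ sᶜ, f k := by rw [hf, zero_add]
    _ = ∑ k, f k := Finset.sum_add_sum_compl s f

theorem sum_sum_comp_eq_of_symm (he : Function.Injective e)
    (hs : ∀ k, k ∈ Set.range e ↔ k ∉ s) {F : κ → κ → G} (hF : ∀ k l, F k l = F l k)
    (hF_zero : ∀ k, ∑ l ∈ s, F k l = 0) :
    ∑ i, ∑ j, F (e i) (e j) = ∑ k, ∑ l, F k l := by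
  have sum_comp (k : κ) : ∑ j, F k (e j) = ∑ l, F k l :=
    sum_comp_eq_of_sum_compl_range_eq_zero he hs (hF_zero k)
  calc ∑ i, ∑ j, F (e i) (e j) = ∑ i, ∑ l, F (e i) l := by simp only [sum_comp]
    _ = ∑ l, ∑ i, F l (e i) := by
      rw [Finset.sum_comm]
      simp only [hF (e _)]
    _ = ∑ l, ∑ k, F l k := by simp only [sum_comp]

end SumComp

namespace SkewAug

theorem B_apply_swap (M : SkewAug) (i j : Fin M.n) : M.B j i = -M.B i j :=
  congrFun₂ M.skew i j

/-- The skew-symmetric matrix `C` with entries `2 * B i j - A i + A j`, normalized so that the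
column condition of a reduction of type 2 becomes a change of sign; see
`Red2Cond.centered_eq_neg`. -/
def centered (M : SkewAug) : Matrix (Fin M.n) (Fin M.n) ℤ :=
  Matrix.of fun i j => 2 * M.B i j - M.A i + M.A j

theorem centered_swap (M : SkewAug) (i j : Fin M.n) : M.centered j i = -M.centered i j := by
  simp only [centered, Matrix.of_apply, M.B_apply_swap i j]
  ring

theorem Red2Cond.centered_eq_neg {M : SkewAug} {r t : Fin M.n} (h : Red2Cond M r t)
    (i : Fin M.n) : M.centered i t = -M.centered i r := by
  obtain ⟨-, hA, hB⟩ := h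
  simp only [centered, Matrix.of_apply]
  linarith [hB i]

section WeightedSum

variable {G : Type*} [AddCommGroup G] {φ : ℤ → G} {M N : SkewAug}

/-- The sum `∑ A i * A j * φ (C i j)` over all ordered pairs of indices, including `i = j`, where
`C` is `centered M`. For even `φ` it is an invariant of S-equivalence. -/
def weightedSum (φ : ℤ → G) (M : SkewAug) : G :=
  ∑ i, ∑ j, (M.A i * M.A j) • φ (M.centered i j)

theorem weightedSum_eq_of_submatrix (hφ : φ.Even) {e : Fin N.n → Fin M.n}
    (he : Function.Injective e) (hB : ∀ i j, N.B i j = M.B (e i) (e j))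
    (hA : ∀ i, N.A i = M.A (e i)) {s : Finset (Fin M.n)} (hs : ∀ k, k ∈ Set.range e ↔ k ∉ s)
    (hs_zero : ∀ i, ∑ k ∈ s, (M.A i * M.A k) • φ (M.centered i k) = 0) :
    weightedSum φ M = weightedSum φ N := by
  have centered_eq (i j : Fin N.n) : N.centered i j = M.centered (e i) (e j) := by
    simp only [centered, Matrix.of_apply, hB, hA]
  have symm_term (k l : Fin M.n) : (M.A k * M.A l) • φ (M.centered k l) =
      (M.A l * M.A k) • φ (M.centered l k) := by
    rw [M.centered_swap k l, hφ, mul_comm]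
  simp only [weightedSum, hA, centered_eq]
  exact (sum_sum_comp_eq_of_symm he hs symm_term hs_zero).symm

theorem permMatrixOf_eq_permMatrix {n : ℕ} (σ : Equiv.Perm (Fin n)) :
    permMatrixOf σ = σ⁻¹.permMatrix ℤ := by
  ext i j
  simp [permMatrixOf, Equiv.Perm.permMatrix, PEquiv.toMatrix_apply, Equiv.eq_symm_apply, eq_comm]

theorem PermStep.exists_equiv (h : PermStep M N) :
    ∃ e : Fin N.n ≃ Fin M.n,
      (∀ i j, N.B i j = M.B (e i) (e j)) ∧ ∀ i, N.A i = M.A (e i) := by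
  obtain ⟨hn, P, ⟨σ, rfl⟩, hB, hA⟩ := h
  rw [permMatrixOf_eq_permMatrix] at hB hA
  refine ⟨σ⁻¹.trans (finCongr hn.symm), fun i j => ?_, fun i => ?_⟩
  · rw [hB, Matrix.transpose_permMatrix, PEquiv.toMatrix_toPEquiv_mul,
      PEquiv.mul_toMatrix_toPEquiv]
    simp
  · rw [hA, Matrix.permMatrix_mulVec]
    rfl

theorem PermStep.weightedSum_eq (hφ : φ.Even) (h : PermStep M N) :
    weightedSum φ M = weightedSum φ N := by
  obtain ⟨e, hB, hA⟩ := h.exists_equiv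
  exact weightedSum_eq_of_submatrix hφ e.injective hB hA (s := ∅) (by simp [e.surjective.range_eq])
    (by simp)

theorem DeleteAt.weightedSum_eq (hφ : φ.Even) {s : Finset (Fin M.n)} (h : DeleteAt M s N)
    (hs_zero : ∀ i, ∑ k ∈ s, (M.A i * M.A k) • φ (M.centered i k) = 0) :
    weightedSum φ M = weightedSum φ N := by
  obtain ⟨e, he, hs, hB, hA⟩ := h
  exact weightedSum_eq_of_submatrix hφ he.injective hB hA hs hs_zero

theorem Red1.weightedSum_eq (hφ : φ.Even) (h : Red1 M N) :
    weightedSum φ M = weightedSum φ N := by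
  obtain ⟨j, ⟨hA, -⟩, hdel⟩ := h
  rw [← Finset.coe_singleton] at hdel
  exact hdel.weightedSum_eq hφ fun i => by simp [hA]

theorem Red2.weightedSum_eq (hφ : φ.Even) (h : Red2 M N) :
    weightedSum φ M = weightedSum φ N := by
  obtain ⟨r, t, hrt, hdel⟩ := h
  rw [← Finset.coe_pair] at hdel
  refine hdel.weightedSum_eq hφ fun i => ?_
  rw [Finset.sum_pair hrt.1, hrt.centered_eq_neg, hφ, hrt.2.1, ← add_smul]
  simp

theorem Move.weightedSum_eq (hφ : φ.Even) (h : Move M N) :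
    weightedSum φ M = weightedSum φ N := by
  rcases h with hperm | hred | hred | hext | hext
  · exact hperm.weightedSum_eq hφ
  · exact hred.weightedSum_eq hφ
  · exact hred.weightedSum_eq hφ
  · exact (hext.weightedSum_eq hφ).symm
  · exact (hext.weightedSum_eq hφ).symm

theorem SEquiv.weightedSum_eq (hφ : φ.Even) (h : SEquiv M N) :
    weightedSum φ M = weightedSum φ N := by
  induction (h : Relation.ReflTransGen Move M N) with
  | refl => rfl
  | tail _ hmove ih => exact ih.trans (hmove.weightedSum_eq hφ)

theorem Trivial.weightedSum_eq_zero (hφ : φ.Even) (h : Trivial M) : weightedSum φ M = 0 :=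
  SEquiv.weightedSum_eq hφ h

end WeightedSum

theorem centered_kishino :
    kishino.centered = !![0, 0, -2, 0; 0, 0, 0, 2; 2, 0, 0, 0; 0, -2, 0, 0] :=
  Matrix.ext fun i j => by fin_cases i <;> fin_cases j <;> rfl

theorem weightedSum_sq_kishino : weightedSum (· ^ 2) kishino = -16 := by
  rw [weightedSum, centered_kishino]
  decide

end SkewAug

/-- The skew-symmetric augmented matrix associated with
Kishino's doodle is not trivial: it is not S-equivalent to the empty matrix.
(Hence Kishino's doodle is non-classical.) -/
theorem kishino_not_trivial : ¬ SkewAug.Trivial kishino := by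
  intro h
  have sum_eq_zero := h.weightedSum_eq_zero (φ := (· ^ 2)) neg_sq
  rw [SkewAug.weightedSum_sq_kishino] at sum_eq_zero
  norm_num at sum_eq_zero
end
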